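/- Let G be a group, and let K, K' be positive definite maps on G satisfying K(x,y) = K(zx,zy) and K'(x,y) = K'(zx,zy) for all x, y, z ∈ G, and K' ≤ cK for some c > 0. Let (H_K, π_K, ξ₀) be the cyclic unitary representation associated to K. Then there exists a unique positive bounded operator S on H_K commuting with π_K(x) for every x ∈ G such that ⟨S π_K(x) ξ₀, π_K(y) ξ₀⟩ = K'(x,y) for all x, y ∈ G. Conversely, for every positive bounded operator S in the commutant of π_K(G), there is a unique positive definite map K' on G with ⟨S π_K(x) ξ₀, π_K(y) ξ₀⟩ = K'(x,y) for all x, y ∈ G, and it satisfies K'(x,y) = K'(zx,zy) for all x, y, z ∈ G. -/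

import Mathlib

open scoped InnerProductSpace ComplexOrder Classical
open Complex

noncomputable section

/-- A kernel `K : X × X → ℂ` is positive definite if every finite quadratic form
`∑ i j, K (x i) (x j) * ξ i * conj (ξ j)` is a nonnegative real number
(expressed via the partial order on `ℂ`). -/
def IsPosDefKernel {X : Type*} (K : X → X → ℂ) : Prop :=
  ∀ (n : ℕ) (x : Fin n → X) (ξ : Fin n → ℂ),
    0 ≤ ∑ i, ∑ j, K (x i) (x j) * ξ i * (starRingEnd ℂ) (ξ j)

/-- `(H, v)` is a Kolmogorov representation of the kernel `K`: the span of the range of `v`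
is dense and inner products of the `v x` reproduce `K`.  Mathlib's inner product is
conjugate-linear in the first variable, while the paper's is conjugate-linear in the second,
so the paper's `⟨v x, v y⟩ = K x y` reads `⟪v y, v x⟫_ℂ = K x y` here. -/
def IsKolmogorovRep {X : Type*} (K : X → X → ℂ) (H : Type*) [NormedAddCommGroup H]
    [InnerProductSpace ℂ H] (v : X → H) : Prop :=
  Dense (↑(Submodule.span ℂ (Set.range v)) : Set H) ∧
    ∀ x y : X, ⟪v y, v x⟫_ℂ = K x y

/-- `L² ≤ c K K'` in the sense of Dutkay. -/
def KernelSqLE {X : Type*} (L K K' : X → X → ℂ) (c : ℝ) : Prop :=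
  ∀ (m n : ℕ) (x : Fin m → X) (y : Fin n → X) (ξ : Fin m → ℂ) (η : Fin n → ℂ),
    ‖∑ i, ∑ j, L (x i) (y j) * ξ i * (starRingEnd ℂ) (η j)‖ ^ 2 ≤
      c * (∑ i, ∑ i', K (x i) (x i') * ξ i * (starRingEnd ℂ) (ξ i')).re *
        (∑ j, ∑ j', K' (y j) (y j') * η j * (starRingEnd ℂ) (η j')).re

/-- `K' ≤ c K` for kernels, via the partial order on `ℂ`. -/
def KernelLE {X : Type*} (K' K : X → X → ℂ) (c : ℝ) : Prop :=
  ∀ (n : ℕ) (x : Fin n → X) (ξ : Fin n → ℂ),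
    ∑ i, ∑ j, K' (x i) (x j) * ξ i * (starRingEnd ℂ) (ξ j) ≤
      (c : ℂ) * ∑ i, ∑ j, K (x i) (x j) * ξ i * (starRingEnd ℂ) (ξ j)

/-- A bounded operator is positive if `⟨S v, v⟩ ≥ 0` for all `v` (paper convention;
in Mathlib's convention this is `0 ≤ ⟪v, S v⟫`). -/
def IsPositiveOp {H : Type*} [NormedAddCommGroup H] [InnerProductSpace ℂ H]
    (S : H →L[ℂ] H) : Prop :=
  ∀ v : H, 0 ≤ ⟪v, S v⟫_ℂ

/-- A family of vectors is a normalized tight frame. -/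
def IsNormalizedTightFrame {H : Type*} [NormedAddCommGroup H] [InnerProductSpace ℂ H]
    {ι : Type*} (v : ι → H) : Prop :=
  ∀ f : H, ∑' i, ‖⟪v i, f⟫_ℂ‖ ^ 2 = ‖f‖ ^ 2

/-- `P` is the orthogonal projection onto the set `S`: idempotent, self-adjoint,
with range `S`. -/
def IsOrthProjectionOnto {H : Type*} [NormedAddCommGroup H] [InnerProductSpace ℂ H]
    (P : H →L[ℂ] H) (S : Set H) : Prop :=
  (∀ v, P (P v) = P v) ∧ (∀ v w : H, ⟪P v, w⟫_ℂ = ⟪v, P w⟫_ℂ) ∧ Set.range P = S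

/-- The two covariance relations for a Gabor-type kernel on `ℤ²`. -/
def GaborCovariant (lam : ℂ) (K : ℤ × ℤ → ℤ × ℤ → ℂ) : Prop :=
  (∀ m n m' n' : ℤ, K (m + 1, n) (m' + 1, n') = K (m, n) (m', n')) ∧
  (∀ m n m' n' : ℤ, K (m, n + 1) (m', n' + 1) = lam ^ (m - m') * K (m, n) (m', n'))

/-- The vectors `U^m V^n ξ₀` of a Gabor type unitary system. -/
def gaborVec {H : Type*} [NormedAddCommGroup H] [InnerProductSpace ℂ H] [CompleteSpace H]
    (U V : unitary (H →L[ℂ] H)) (ξ₀ : H) (p : ℤ × ℤ) : H :=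
  ((U ^ p.1 * V ^ p.2 : unitary (H →L[ℂ] H)) : H →L[ℂ] H) ξ₀

/-- `(H, U, V, ξ₀)` is the Gabor type cyclic system associated to the kernel `K` and the
unimodular scalar `lam` : `U V = lam V U`, the vectors `U^m V^n ξ₀` span a dense subspace,
and their inner products reproduce `K`. -/
def IsGaborSystem {H : Type*} [NormedAddCommGroup H] [InnerProductSpace ℂ H] [CompleteSpace H]
    (lam : ℂ) (K : ℤ × ℤ → ℤ × ℤ → ℂ) (U V : unitary (H →L[ℂ] H)) (ξ₀ : H) : Prop :=
  ((U : H →L[ℂ] H) * (V : H →L[ℂ] H) = lam • ((V : H →L[ℂ] H) * (U : H →L[ℂ] H))) ∧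
  Dense (↑(Submodule.span ℂ (Set.range (gaborVec U V ξ₀))) : Set H) ∧
  ∀ m n m' n' : ℤ,
    ⟪gaborVec U V ξ₀ (m', n'), gaborVec U V ξ₀ (m, n)⟫_ℂ = K (m, n) (m', n')

/-- `(H, π, ξ₀)` is the cyclic unitary representation associated to the group positive
definite map `K`. -/
def IsGroupCyclicRep {G : Type*} [Group G] (K : G → G → ℂ)
    {H : Type*} [NormedAddCommGroup H] [InnerProductSpace ℂ H]
    (π : G →* (H ≃ₗᵢ[ℂ] H)) (ξ₀ : H) : Prop :=
  Dense (↑(Submodule.span ℂ (Set.range fun g : G => π g ξ₀)) : Set H) ∧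
    ∀ x y : G, ⟪π y ξ₀, π x ξ₀⟫_ℂ = K x y


/-- The quadratic sesquilinear form of a kernel on finitely supported functions. -/
def kform {X : Type*} (K : X → X → ℂ) (f g : X →₀ ℂ) : ℂ :=
  f.sum fun y b => g.sum fun x a => K x y * a * (starRingEnd ℂ) b

lemma kform_self {X : Type*} (f : X →₀ ℂ) :
    ∃ (n : ℕ) (x : Fin n → X) (ξ : Fin n → ℂ), ∀ K : X → X → ℂ,
      kform K f f = ∑ i, ∑ j, K (x i) (x j) * ξ i * (starRingEnd ℂ) (ξ j) := by
  refine ⟨_, fun i => (f.support.equivFin.symm i : X), fun i => f (f.support.equivFin.symm i),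
    fun K => ?_⟩
  rw [Finset.sum_comm]
  rw [Equiv.sum_comp f.support.equivFin.symm (fun j : f.support => ∑ i,
    K (f.support.equivFin.symm i : X) j * f (f.support.equivFin.symm i) *
      (starRingEnd ℂ) (f j))]
  rw [Finset.sum_coe_sort f.support (fun j : X => ∑ i,
    K (f.support.equivFin.symm i : X) j * f (f.support.equivFin.symm i) *
      (starRingEnd ℂ) (f j))]
  unfold kform Finsupp.sum
  refine Finset.sum_congr rfl fun j _ => ?_
  rw [Equiv.sum_comp f.support.equivFin.symm (fun i : f.support =>
    K (i : X) j * f i * (starRingEnd ℂ) (f j))]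
  rw [Finset.sum_coe_sort f.support (fun i : X => K i j * f i * (starRingEnd ℂ) (f j))]

lemma posdef_herm {X : Type*} {K : X → X → ℂ} (hK : IsPosDefKernel K) (x y : X) :
    (starRingEnd ℂ) (K x y) = K y x := by
  have h1 := hK 1 ![x] ![1]
  have h2 := hK 1 ![y] ![1]
  have h3 := hK 2 ![x, y] ![1, 1]
  have h4 := hK 2 ![x, y] ![1, I]
  simp [Fin.sum_univ_two, Complex.le_def] at h1 h2 h3 h4
  apply Complex.ext <;> simp <;> linarith [h1.2, h2.2, h3.2, h4.2]

/-- Pre-inner product on finitely supported functions. -/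
def kcore {X : Type*} {K : X → X → ℂ} (hK : IsPosDefKernel K) :
    PreInnerProductSpace.Core ℂ (X →₀ ℂ) where
  inner f g := kform K f g
  conj_inner_symm f g := by
    simp only [kform, Finsupp.sum, map_sum, map_mul, posdef_herm hK, Complex.conj_conj]
    rw [Finset.sum_comm]
    refine Finset.sum_congr rfl fun _ _ => Finset.sum_congr rfl fun _ _ => by ring
  re_inner_nonneg f := by
    obtain ⟨n, x, ξ, h⟩ := kform_self f
    rw [h]
    exact (Complex.le_def.1 (hK n x ξ)).1
  add_left f g h := by
    unfold kform
    rw [Finsupp.sum_add_index']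
    · simp
    · intro a b c
      simp [mul_add, Finsupp.sum_add]
  smul_left f g r := by
    unfold kform
    rw [Finsupp.sum_smul_index' (by simp), Finsupp.mul_sum]
    refine Finset.sum_congr rfl fun _ _ => ?_
    dsimp only
    rw [Finsupp.mul_sum]
    refine Finset.sum_congr rfl fun _ _ => ?_
    simp
    ring

lemma exists_kolmogorov.{u} {X : Type u} {K : X → X → ℂ} (hK : IsPosDefKernel K) :
    ∃ (E : Type u) (_ : NormedAddCommGroup E) (_ : InnerProductSpace ℂ E) (_ : CompleteSpace E)
      (v : X → E), ∀ x y : X, ⟪v y, v x⟫_ℂ = K x y := by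
  let c := kcore hK
  let : SeminormedAddCommGroup (X →₀ ℂ) := InnerProductSpace.Core.toSeminormedAddCommGroup (c := c)
  let : InnerProductSpace ℂ (X →₀ ℂ) := InnerProductSpace.ofCore c
  refine ⟨UniformSpace.Completion (X →₀ ℂ), inferInstance, inferInstance, inferInstance,
    fun x => ((Finsupp.single x (1 : ℂ) : X →₀ ℂ) : UniformSpace.Completion (X →₀ ℂ)),
    fun x y => ?_⟩
  rw [UniformSpace.Completion.inner_coe]
  change kform K _ _ = _
  simp [kform]

lemma inner_lc {X E : Type*} [NormedAddCommGroup E] [InnerProductSpace ℂ E] {K : X → X → ℂ}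
    (v : X → E) (hv : ∀ x y, ⟪v y, v x⟫_ℂ = K x y) (f g : X →₀ ℂ) :
    ⟪Finsupp.linearCombination ℂ v f, Finsupp.linearCombination ℂ v g⟫_ℂ = kform K f g := by
  simp only [Finsupp.linearCombination_apply, kform, Finsupp.sum, sum_inner, inner_sum,
    inner_smul_left, inner_smul_right, hv, Finset.mul_sum]
  try rw [Finset.sum_comm]
  refine Finset.sum_congr rfl fun _ _ => Finset.sum_congr rfl fun _ _ => by ring

lemma eq_of_dense_inner {X H : Type*} [NormedAddCommGroup H] [InnerProductSpace ℂ H] {v : X → H}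
    (hd : Dense (↑(Submodule.span ℂ (Set.range v)) : Set H)) {A B : H →L[ℂ] H}
    (h : ∀ x y, ⟪v y, A (v x)⟫_ℂ = ⟪v y, B (v x)⟫_ℂ) : A = B := by
  refine ContinuousLinearMap.ext_on hd ?_
  rintro _ ⟨x, rfl⟩
  have h2 : innerSL ℂ (A (v x)) = innerSL ℂ (B (v x)) := by
    refine ContinuousLinearMap.ext_on hd ?_
    rintro _ ⟨y, rfl⟩
    simp only [innerSL_apply_apply]
    rw [← inner_conj_symm, h, inner_conj_symm]
  refine ext_inner_right ℂ fun w => ?_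
  simpa using congrArg (fun L : H →L[ℂ] ℂ => L w) h2

lemma exists_op {X H : Type*} [NormedAddCommGroup H] [InnerProductSpace ℂ H] [CompleteSpace H]
    {K K' : X → X → ℂ} {v : X → H}
    (hd : Dense (↑(Submodule.span ℂ (Set.range v)) : Set H)) (hv : ∀ x y, ⟪v y, v x⟫_ℂ = K x y)
    {c : ℝ} (hc : 0 < c) (hK' : IsPosDefKernel K') (hle : KernelLE K' K c) :
    ∃ S : H →L[ℂ] H, IsPositiveOp S ∧ ∀ x y, ⟪v y, S (v x)⟫_ℂ = K' x y := by
  obtain ⟨E, _, _, _, w, hw⟩ := exists_kolmogorov hK'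
  have hdr : DenseRange (Finsupp.linearCombination ℂ v) := by
    rw [DenseRange, ← LinearMap.coe_range, Finsupp.range_linearCombination]
    exact hd
  have hn : ∃ C, ∀ f, ‖Finsupp.linearCombination ℂ w f‖ ≤
      C * ‖Finsupp.linearCombination ℂ v f‖ := by
    refine ⟨√c, fun f => ?_⟩
    rw [← sq_le_sq₀ (norm_nonneg _) (by positivity), mul_pow, Real.sq_sqrt hc.le,
      ← inner_self_eq_norm_sq (𝕜 := ℂ), ← inner_self_eq_norm_sq (𝕜 := ℂ), inner_lc w hw,
      inner_lc v hv]
    obtain ⟨n, x, ξ, h⟩ := kform_self f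
    have := (Complex.le_def.1 (hle n x ξ)).1
    rw [← h, ← h, Complex.re_ofReal_mul] at this
    exact this
  set A : H →L[ℂ] E :=
    (Finsupp.linearCombination ℂ w).extendOfNorm (Finsupp.linearCombination ℂ v)
  have hA : ∀ x, A (v x) = w x := fun x => by
    simpa using LinearMap.extendOfNorm_eq hdr hn (Finsupp.single x 1)
  refine ⟨A.adjoint ∘L A, fun u => ?_, fun x y => ?_⟩
  · rw [ContinuousLinearMap.comp_apply, ContinuousLinearMap.adjoint_inner_right]
    rw [inner_self_eq_norm_sq_to_K]
    have h := Complex.zero_le_real.2 (sq_nonneg ‖A u‖)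
    rw [Complex.ofReal_pow] at h
    exact h
  · rw [ContinuousLinearMap.comp_apply, ContinuousLinearMap.adjoint_inner_right, hA, hA, hw]

/-- Positive operators in the commutant of the cyclic unitary representation of a group
positive definite map `K` correspond to invariant positive definite maps `K' ≤ c K`. -/
theorem group_commutant_positive_operators {G : Type*} [Group G] (K : G → G → ℂ)
    (hK : IsPosDefKernel K) (hKinv : ∀ x y z : G, K x y = K (z * x) (z * y))
    {H : Type*} [NormedAddCommGroup H] [InnerProductSpace ℂ H] [CompleteSpace H]
    (π : G →* (H ≃ₗᵢ[ℂ] H)) (ξ₀ : H) (hrep : IsGroupCyclicRep K π ξ₀) :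
    (∀ (K' : G → G → ℂ) (c : ℝ), 0 < c → IsPosDefKernel K' →
      (∀ x y z : G, K' x y = K' (z * x) (z * y)) → KernelLE K' K c →
      ∃! S : H →L[ℂ] H,
        IsPositiveOp S ∧ (∀ (g : G) (v : H), S (π g v) = π g (S v)) ∧
          (∀ x y : G, ⟪π y ξ₀, S (π x ξ₀)⟫_ℂ = K' x y)) ∧
    (∀ S : H →L[ℂ] H, IsPositiveOp S → (∀ (g : G) (v : H), S (π g v) = π g (S v)) →
      (∃! K' : G → G → ℂ, ∀ x y : G, ⟪π y ξ₀, S (π x ξ₀)⟫_ℂ = K' x y) ∧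
      (∀ K' : G → G → ℂ, (∀ x y : G, ⟪π y ξ₀, S (π x ξ₀)⟫_ℂ = K' x y) →
        IsPosDefKernel K' ∧ ∀ x y z : G, K' x y = K' (z * x) (z * y))) := by
  obtain ⟨hd, hv⟩ := hrep
  have key : ∀ (S : H →L[ℂ] H) (g x y : G),
      ⟪π y ξ₀, π g (S (π x ξ₀))⟫_ℂ = ⟪π (g⁻¹ * y) ξ₀, S (π x ξ₀)⟫_ℂ := by
    intro S g x y
    rw [← LinearIsometryEquiv.inner_map_map (π g) (π (g⁻¹ * y) ξ₀)]
    congr 1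
    have h : π y = π g * π (g⁻¹ * y) := by rw [← map_mul, mul_inv_cancel_left]
    rw [h]
    rfl
  refine ⟨fun K' c hc hK' hinv hle => ?_, fun S hS hcomm => ⟨⟨_, fun x y => rfl, ?_⟩, ?_⟩⟩
  · obtain ⟨S, hS, hSK⟩ := exists_op hd hv hc hK' hle
    refine ⟨S, ⟨hS, fun g u => ?_, hSK⟩, ?_⟩
    · have : S ∘L ((π g).toContinuousLinearEquiv : H →L[ℂ] H) =
          ((π g).toContinuousLinearEquiv : H →L[ℂ] H) ∘L S := by
        refine eq_of_dense_inner hd fun x y => ?_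
        change ⟪π y ξ₀, S (π g (π x ξ₀))⟫_ℂ = ⟪π y ξ₀, π g (S (π x ξ₀))⟫_ℂ
        rw [key, hSK, hinv _ _ g, mul_inv_cancel_left, ← hSK, map_mul]
        rfl
      exact congrArg (fun L : H →L[ℂ] H => L u) this
    · rintro S' ⟨-, -, h'⟩
      exact eq_of_dense_inner hd fun x y => by rw [h', hSK]
  · intro K' h
    funext x y
    exact (h x y).symm
  · intro K' h
    refine ⟨fun n x ξ => ?_, fun x y z => ?_⟩
    · have := hS (∑ i, ξ i • π (x i) ξ₀)
      simp only [map_sum, map_smul, sum_inner, inner_sum, inner_smul_left, inner_smul_right,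
        h, Finset.mul_sum] at this
      convert this using 1
      first
      | (refine Finset.sum_congr rfl fun _ _ => Finset.sum_congr rfl fun _ _ => by ring)
      | (rw [Finset.sum_comm]
         refine Finset.sum_congr rfl fun _ _ => Finset.sum_congr rfl fun _ _ => by ring)
    · rw [← h, ← h, map_mul π z x]
      change _ = ⟪_, S (π z (π x ξ₀))⟫_ℂ
      rw [hcomm z, key, inv_mul_cancel_left]
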